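/- arXiv:1905.04441 — 2 statements merged into one kernel-verified Lean document; each statement's English description precedes it below -/
import Mathlib

section
/- Predefined reconstruction recovers the orthogonal projection onto the reconstruction space: let w : {0,…,N−1} → ℝ, W := U diag(w) D^T, and assume R̃_{sa}(i) ≠ 0 and R̃_{ww}(i) ≠ 0 for every i ∈ {0,…,K−1}. Let H be the K×K diagonal matrix with i-th diagonal entry R̃_{wa}(i)/(R̃_{sa}(i)·R̃_{ww}(i)). Then for every x in the PGS subspace generated by a, the reconstruction W H S^* x equals W (W^* W)^{−1} W^* x, the orthogonal projection of x onto the column space of W. -/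
open Matrix BigOperators

noncomputable section

/-- Downsampling matrix `D ∈ ℂ^{K×N}` with `N = M·K`: `D i j = 1` iff `j ≡ i (mod K)`. -/
def Dmat (K M : ℕ) : Matrix (Fin K) (Fin (M * K)) ℂ :=
  Matrix.of fun i j => if (j : ℕ) % K = (i : ℕ) then 1 else 0

/-- The index `i + K·ℓ` viewed in `Fin (M·K)`. -/
def fold (K M : ℕ) (i : Fin K) (ℓ : Fin M) : Fin (M * K) :=
  ⟨(i : ℕ) + K * (ℓ : ℕ), by
    have hi := i.isLt
    calc (i : ℕ) + K * (ℓ : ℕ) < K + K * (ℓ : ℕ) := by omega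
      _ = K * ((ℓ : ℕ) + 1) := by ring
      _ ≤ K * M := Nat.mul_le_mul_left K ℓ.isLt
      _ = M * K := Nat.mul_comm K M⟩

/-- Sampled cross-correlation `R̃_{fg}(i) = ∑_{ℓ<M} f(i+Kℓ) g(i+Kℓ)`. -/
def Rtil (K M : ℕ) (f g : Fin (M * K) → ℝ) (i : Fin K) : ℝ :=
  ∑ ℓ : Fin M, f (fold K M i ℓ) * g (fold K M i ℓ)

/-- Sampling matrix `S^* = D diag(s) U^*`. -/
def SamplingMat (K M : ℕ) (U : Matrix (Fin (M * K)) (Fin (M * K)) ℂ)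
    (s : Fin (M * K) → ℝ) : Matrix (Fin K) (Fin (M * K)) ℂ :=
  Dmat K M * Matrix.diagonal (fun j => (s j : ℂ)) * Uᴴ

/-- Synthesis matrix `A = U diag(a) Dᵀ`. -/
def SynthesisMat (K M : ℕ) (U : Matrix (Fin (M * K)) (Fin (M * K)) ℂ)
    (a : Fin (M * K) → ℝ) : Matrix (Fin (M * K)) (Fin K) ℂ :=
  U * Matrix.diagonal (fun j => (a j : ℂ)) * (Dmat K M)ᵀ

/-!
Unitarity of `U` makes every sampling–synthesis product `S^* A` diagonal, with the sampled
cross-correlations on the diagonal. The reconstruction `W H S^*` agrees with the projection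
`W (W^* W)⁻¹ W^*` on the columns of `A` as soon as `H` solves the normal equation
`(W^* W) H (S^* A) = W^* A`; between diagonal matrices this equation is the entrywise identity
`R̃_{ww} · (R̃_{wa} / (R̃_{sa} R̃_{ww})) · R̃_{sa} = R̃_{wa}`.
-/

theorem mul_eq_mul_inv_mul_mul_of_normal_equation {R m n p : Type*} [CommRing R]
    [Fintype m] [Fintype n] [DecidableEq n]
    {W : Matrix m n R} {V : Matrix n m R} {X : Matrix n p R} {Y : Matrix m p R}
    (hVW : IsUnit (V * W)) (hX : V * W * X = V * Y) :
    W * X = W * (V * W)⁻¹ * V * Y := by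
  have hsolve : X = (V * W)⁻¹ * (V * Y) := by
    rw [← hX, nonsing_inv_mul_cancel_left _ _ ((isUnit_iff_isUnit_det _).mp hVW)]
  rw [hsolve]
  simp only [Matrix.mul_assoc]

section Downsampling

variable {K M : ℕ}

theorem fold_eq_finProdFinEquiv (i : Fin K) (ℓ : Fin M) :
    fold K M i ℓ = finProdFinEquiv (ℓ, i) :=
  rfl

theorem sum_fold {β : Type*} [AddCommMonoid β] (f : Fin (M * K) → β) :
    ∑ i, ∑ ℓ, f (fold K M i ℓ) = ∑ j, f j := by
  simp only [fold_eq_finProdFinEquiv]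
  rw [Finset.sum_comm, ← Fintype.sum_prod_type', finProdFinEquiv.sum_comp]

theorem Dmat_apply_fold (i k : Fin K) (ℓ : Fin M) :
    Dmat K M i (fold K M k ℓ) = if k = i then 1 else 0 := by
  simp [Dmat, fold, Nat.mod_eq_of_lt k.isLt, Fin.ext_iff]

theorem Dmat_mul_diagonal_mul_transpose (f : Fin (M * K) → ℂ) :
    Dmat K M * diagonal f * (Dmat K M)ᵀ = diagonal fun i => ∑ ℓ, f (fold K M i ℓ) := by
  ext i k
  rw [mul_apply, ← sum_fold]
  obtain rfl | hik := eq_or_ne i k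
  · simp [Dmat_apply_fold]
  · simp [Dmat_apply_fold, hik, hik.symm]

theorem conjTranspose_Dmat : (Dmat K M)ᴴ = (Dmat K M)ᵀ := by
  ext j i
  simp [Dmat, apply_ite]

end Downsampling

section GraphSpectrum

variable {K M : ℕ} (U : Matrix (Fin (M * K)) (Fin (M * K)) ℂ)

theorem conjTranspose_SynthesisMat (f : Fin (M * K) → ℝ) :
    (SynthesisMat K M U f)ᴴ = SamplingMat K M U f := by
  have hdiag : (diagonal fun j => (f j : ℂ))ᴴ = diagonal fun j => (f j : ℂ) := by
    simp [diagonal_conjTranspose, Pi.star_def]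
  rw [SynthesisMat, SamplingMat, conjTranspose_mul, conjTranspose_mul, hdiag, ← conjTranspose_Dmat,
    conjTranspose_conjTranspose, Matrix.mul_assoc]

variable {U}

theorem SamplingMat_mul_SynthesisMat (hU : U ∈ unitaryGroup (Fin (M * K)) ℂ)
    (f g : Fin (M * K) → ℝ) :
    SamplingMat K M U f * SynthesisMat K M U g = diagonal fun i => (Rtil K M f g i : ℂ) :=
  calc
    _ = Dmat K M * diagonal (fun j => (f j : ℂ)) * (Uᴴ * U) * diagonal (fun j => (g j : ℂ)) *
          (Dmat K M)ᵀ := by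
      simp only [SamplingMat, SynthesisMat, Matrix.mul_assoc]
    _ = Dmat K M * diagonal (fun j => (f j : ℂ) * (g j : ℂ)) * (Dmat K M)ᵀ := by
      rw [← star_eq_conjTranspose, mem_unitaryGroup_iff'.mp hU, Matrix.mul_one,
        Matrix.mul_assoc (Dmat K M), diagonal_mul_diagonal]
    _ = diagonal fun i => (Rtil K M f g i : ℂ) := by
      simp only [Dmat_mul_diagonal_mul_transpose, Rtil, Complex.ofReal_sum, Complex.ofReal_mul]

theorem isUnit_conjTranspose_mul_SynthesisMat_iff (hU : U ∈ unitaryGroup (Fin (M * K)) ℂ)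
    (f : Fin (M * K) → ℝ) :
    IsUnit ((SynthesisMat K M U f)ᴴ * SynthesisMat K M U f) ↔ ∀ i, Rtil K M f f i ≠ 0 := by
  simp only [conjTranspose_SynthesisMat, SamplingMat_mul_SynthesisMat hU, isUnit_diagonal,
    Pi.isUnit_iff, isUnit_iff_ne_zero, Complex.ofReal_ne_zero]

end GraphSpectrum

/-- Predefined reconstruction recovers the orthogonal projection onto the
reconstruction space: with `H = diag(R̃_{wa}/(R̃_{sa}·R̃_{ww}))`, for every `x` in the
PGS subspace generated by `a`, `W H S^* x = W (W^*W)⁻¹ W^* x`. -/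
theorem predefined_reconstruction_orthogonal_projection (K M : ℕ) (hK : 0 < K) (hM : 0 < M)
    (U : Matrix (Fin (M * K)) (Fin (M * K)) ℂ)
    (hU : U ∈ Matrix.unitaryGroup (Fin (M * K)) ℂ)
    (s a w : Fin (M * K) → ℝ)
    (hRsa : ∀ i : Fin K, Rtil K M s a i ≠ 0)
    (hRww : ∀ i : Fin K, Rtil K M w w i ≠ 0) :
    ∀ x : Fin (M * K) → ℂ,
      (∃ d : Fin K → ℂ, x = (SynthesisMat K M U a).mulVec d) →
      (SynthesisMat K M U w).mulVec
        ((Matrix.diagonal (fun i : Fin K =>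
            ((Rtil K M w a i / (Rtil K M s a i * Rtil K M w w i) : ℝ) : ℂ))).mulVec
          ((SamplingMat K M U s).mulVec x))
      = (SynthesisMat K M U w
          * ((SynthesisMat K M U w)ᴴ * SynthesisMat K M U w)⁻¹
          * (SynthesisMat K M U w)ᴴ).mulVec x := by
  rintro x ⟨d, rfl⟩
  have hentry (i : Fin K) : Rtil K M w w i *
      (Rtil K M w a i / (Rtil K M s a i * Rtil K M w w i) * Rtil K M s a i) = Rtil K M w a i := by
    have hsa := hRsa i
    have hww := hRww i
    field_simp
  have hnormal : (SynthesisMat K M U w)ᴴ * SynthesisMat K M U w *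
      (diagonal (fun i =>
          ((Rtil K M w a i / (Rtil K M s a i * Rtil K M w w i) : ℝ) : ℂ)) *
        (SamplingMat K M U s * SynthesisMat K M U a)) =
      (SynthesisMat K M U w)ᴴ * SynthesisMat K M U a := by
    simp only [conjTranspose_SynthesisMat, SamplingMat_mul_SynthesisMat hU, diagonal_mul_diagonal,
      ← Complex.ofReal_mul, hentry]
  have hgram := (isUnit_conjTranspose_mul_SynthesisMat_iff hU w).mpr hRww
  simp only [mulVec_mulVec]
  rw [mul_eq_mul_inv_mul_mul_of_normal_equation hgram hnormal]
end
end

section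
/- Spectral form of the smoothness-prior correction filter: let v : {0,…,N−1} → ℝ with v(i) ≠ 0 for all i, set V := U diag(v) U^*, and define w̃ : {0,…,N−1} → ℝ by w̃(i) = s(i)/v(i)². Then with S := U diag(s) D^T (so that S^* = D diag(s) U^* is the sampling matrix), the matrix S^* (V^* V)^{−1} S equals the K×K diagonal matrix with i-th diagonal entry R̃_{s w̃}(i) = Σ_{ℓ=0}^{M−1} s(i+Kℓ)²/v(i+Kℓ)². Consequently, if R̃_{s w̃}(i) ≠ 0 for all i, the correction transform (S^* (V^*V)^{−1} S)^{−1} is diagonal with entries 1/R̃_{s w̃}(i). -/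
open Matrix BigOperators

noncomputable section

/-! Write `V = U A Uᴴ` and `S = U B` with `A = diag(v)` and `B = diag(s) Dᵀ`. As `U` is unitary,
it cancels from `Sᴴ (Vᴴ V)⁻¹ S`, leaving `Bᴴ (Aᴴ A)⁻¹ B = D diag(|s|² / |v|²) Dᵀ`. Each column of
`D` has exactly one nonzero entry, so `D diag(d) Dᵀ` is diagonal, and its `i`-th entry is the sum of
`d` over the residue class of `i` modulo `K`. -/

section Unitary

variable {n k R : Type*} [Fintype n] [DecidableEq n] [CommRing R] [StarRing R]
  {U : Matrix n n R}

theorem inv_eq_conjTranspose_of_mem_unitaryGroup (hU : U ∈ unitaryGroup n R) : U⁻¹ = Uᴴ :=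
  inv_eq_right_inv (mem_unitaryGroup_iff.mp hU)

theorem conjTranspose_mul_cancel_left (hU : U ∈ unitaryGroup n R) (X : Matrix n k R) :
    Uᴴ * (U * X) = X := by
  rw [← Matrix.mul_assoc, ← star_eq_conjTranspose, mem_unitaryGroup_iff'.mp hU, Matrix.one_mul]

theorem inv_unitary_conj (hU : U ∈ unitaryGroup n R) (A : Matrix n n R) :
    (U * A * Uᴴ)⁻¹ = U * A⁻¹ * Uᴴ := by
  rw [← inv_eq_conjTranspose_of_mem_unitaryGroup hU, Matrix.mul_inv_rev, Matrix.mul_inv_rev,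
    nonsing_inv_nonsing_inv U (isUnit_det_of_right_inverse (mem_unitaryGroup_iff.mp hU)),
    Matrix.mul_assoc]

theorem conjTranspose_mul_inv_gram_mul_unitary_conj (hU : U ∈ unitaryGroup n R)
    (A : Matrix n n R) (B : Matrix n k R) :
    (U * B)ᴴ * ((U * A * Uᴴ)ᴴ * (U * A * Uᴴ))⁻¹ * (U * B) = Bᴴ * (Aᴴ * A)⁻¹ * B := by
  have gram : (U * A * Uᴴ)ᴴ * (U * A * Uᴴ) = U * (Aᴴ * A) * Uᴴ := by
    simp only [conjTranspose_mul, conjTranspose_conjTranspose, Matrix.mul_assoc,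
      conjTranspose_mul_cancel_left hU]
  rw [gram, inv_unitary_conj hU]
  simp only [conjTranspose_mul, Matrix.mul_assoc, conjTranspose_mul_cancel_left hU]

end Unitary

theorem inv_diagonal_of_ne_zero {n F : Type*} [Fintype n] [DecidableEq n] [Field F] {d : n → F}
    (hd : ∀ i, d i ≠ 0) : (diagonal d)⁻¹ = diagonal fun i => (d i)⁻¹ := by
  refine inv_eq_right_inv ?_
  simp [diagonal_mul_diagonal, hd]

section FiberSum

variable {n k : Type*} [DecidableEq k]

/-- The matrix of the linear map summing coordinates over the fibers of `π : n → k`, that is,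
`x ↦ (i ↦ ∑ j with π j = i, x j)`. The downsampling matrix is the case where `π` is reduction
modulo `K`, see `Dmat_eq_fiberSumMatrix`. -/
def fiberSumMatrix (R : Type*) [Zero R] [One R] (π : n → k) : Matrix k n R :=
  of fun i j => if π j = i then 1 else 0

theorem conjTranspose_transpose_fiberSumMatrix {R : Type*} [Semiring R] [StarRing R] (π : n → k) :
    (fiberSumMatrix R π)ᵀᴴ = fiberSumMatrix R π := by
  ext i j
  simp [fiberSumMatrix, apply_ite star]

theorem fiberSumMatrix_mul_diagonal_mul_transpose {R : Type*} [Semiring R] [Fintype n]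
    [DecidableEq n] (π : n → k) (d : n → R) :
    fiberSumMatrix R π * diagonal d * (fiberSumMatrix R π)ᵀ =
      diagonal fun i => ∑ j with π j = i, d j := by
  ext i i'
  rw [mul_apply]
  simp only [mul_diagonal, transpose_apply, fiberSumMatrix, of_apply, diagonal_apply]
  obtain rfl | hne := eq_or_ne i i'
  · simp [Finset.sum_filter, ← ite_and]
  · rw [if_neg hne]
    refine Finset.sum_eq_zero fun j _ => ?_
    obtain rfl | hj := eq_or_ne (π j) i
    · simp [hne]
    · simp [hj]

variable {F : Type*} [Field F] [StarRing F] [Fintype n] [DecidableEq n] {U : Matrix n n F}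

theorem smoothness_correction_eq_diagonal_fiber_sum (π : n → k) (hU : U ∈ unitaryGroup n F)
    (s : n → F) {v : n → F} (hv : ∀ j, v j ≠ 0) :
    (U * diagonal s * (fiberSumMatrix F π)ᵀ)ᴴ
        * ((U * diagonal v * Uᴴ)ᴴ * (U * diagonal v * Uᴴ))⁻¹
        * (U * diagonal s * (fiberSumMatrix F π)ᵀ)
      = diagonal fun i => ∑ j with π j = i, star (s j) * s j / (star (v j) * v j) := by
  have gram_inv : ((diagonal v)ᴴ * diagonal v)⁻¹ = diagonal fun j => (star (v j) * v j)⁻¹ := by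
    rw [diagonal_conjTranspose, diagonal_mul_diagonal]
    exact inv_diagonal_of_ne_zero fun j => mul_ne_zero (star_ne_zero.mpr (hv j)) (hv j)
  have weight : (diagonal s)ᴴ * (diagonal fun j => (star (v j) * v j)⁻¹) * diagonal s
      = diagonal fun j => star (s j) * s j / (star (v j) * v j) := by
    simp only [diagonal_conjTranspose, diagonal_mul_diagonal, Pi.star_apply, div_eq_mul_inv,
      mul_right_comm]
  rw [Matrix.mul_assoc U, conjTranspose_mul_inv_gram_mul_unitary_conj hU, gram_inv,
    conjTranspose_mul, conjTranspose_transpose_fiberSumMatrix,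
    ← fiberSumMatrix_mul_diagonal_mul_transpose, ← weight]
  simp only [Matrix.mul_assoc]

theorem smoothness_correction_spectral_form_general [Fintype k] (π : n → k)
    (hU : U ∈ unitaryGroup n F) (s : n → F) {v : n → F} (hv : ∀ j, v j ≠ 0) :
    ((U * diagonal s * (fiberSumMatrix F π)ᵀ)ᴴ
        * ((U * diagonal v * Uᴴ)ᴴ * (U * diagonal v * Uᴴ))⁻¹
        * (U * diagonal s * (fiberSumMatrix F π)ᵀ)
      = diagonal fun i => ∑ j with π j = i, star (s j) * s j / (star (v j) * v j))
    ∧ ((∀ i, ∑ j with π j = i, star (s j) * s j / (star (v j) * v j) ≠ 0) →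
        ((U * diagonal s * (fiberSumMatrix F π)ᵀ)ᴴ
            * ((U * diagonal v * Uᴴ)ᴴ * (U * diagonal v * Uᴴ))⁻¹
            * (U * diagonal s * (fiberSumMatrix F π)ᵀ))⁻¹
          = diagonal fun i => (∑ j with π j = i, star (s j) * s j / (star (v j) * v j))⁻¹) := by
  rw [smoothness_correction_eq_diagonal_fiber_sum π hU s hv]
  exact ⟨rfl, inv_diagonal_of_ne_zero⟩

end FiberSum

section Downsampling

variable {K M : ℕ}

theorem Dmat_eq_fiberSumMatrix : Dmat K M = fiberSumMatrix ℂ Fin.modNat := by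
  ext i j
  simp [Dmat, fiberSumMatrix, Fin.ext_iff]

theorem finProdFinEquiv_eq_fold (i : Fin K) (ℓ : Fin M) :
    finProdFinEquiv (ℓ, i) = fold K M i ℓ := rfl

theorem modNat_fold (i : Fin K) (ℓ : Fin M) : (fold K M i ℓ).modNat = i := by
  rw [← finProdFinEquiv_eq_fold]
  exact congrArg Prod.snd (finProdFinEquiv.symm_apply_apply (ℓ, i))

theorem sum_modNat_fiber_eq_sum_fold {A : Type*} [AddCommMonoid A] (f : Fin (M * K) → A)
    (i : Fin K) : ∑ j with j.modNat = i, f j = ∑ ℓ, f (fold K M i ℓ) := by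
  rw [Finset.sum_filter, ← finProdFinEquiv.sum_comp, Fintype.sum_prod_type]
  simp [finProdFinEquiv_eq_fold, modNat_fold]

theorem sum_modNat_fiber_eq_ofReal_Rtil (s v : Fin (M * K) → ℝ) (i : Fin K) :
    ∑ j with j.modNat = i, star (s j : ℂ) * s j / (star (v j : ℂ) * v j)
      = (Rtil K M s (fun j => s j / v j ^ 2) i : ℂ) := by
  rw [sum_modNat_fiber_eq_sum_fold]
  simp [Rtil, mul_div_assoc, sq]

end Downsampling

/-- Spectral form of the smoothness-prior correction filter: with `V = U diag(v) U^*`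
and `w̃(i) = s(i)/v(i)²`, the matrix `S^* (V^*V)⁻¹ S` is diagonal with entries
`R̃_{s w̃}(i)`; consequently its inverse is diagonal with entries `1/R̃_{s w̃}(i)`. -/
theorem smoothness_correction_spectral_form (K M : ℕ) (hK : 0 < K) (hM : 0 < M)
    (U : Matrix (Fin (M * K)) (Fin (M * K)) ℂ)
    (hU : U ∈ Matrix.unitaryGroup (Fin (M * K)) ℂ)
    (s v : Fin (M * K) → ℝ) (hv : ∀ i, v i ≠ 0) :
    ((U * Matrix.diagonal (fun j => (s j : ℂ)) * (Dmat K M)ᵀ)ᴴ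
        * ((U * Matrix.diagonal (fun j => (v j : ℂ)) * Uᴴ)ᴴ
            * (U * Matrix.diagonal (fun j => (v j : ℂ)) * Uᴴ))⁻¹
        * (U * Matrix.diagonal (fun j => (s j : ℂ)) * (Dmat K M)ᵀ)
      = Matrix.diagonal (fun i : Fin K =>
          ((Rtil K M s (fun j => s j / (v j) ^ 2) i : ℝ) : ℂ)))
    ∧ ((∀ i : Fin K, Rtil K M s (fun j => s j / (v j) ^ 2) i ≠ 0) →
        ((U * Matrix.diagonal (fun j => (s j : ℂ)) * (Dmat K M)ᵀ)ᴴ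
            * ((U * Matrix.diagonal (fun j => (v j : ℂ)) * Uᴴ)ᴴ
                * (U * Matrix.diagonal (fun j => (v j : ℂ)) * Uᴴ))⁻¹
            * (U * Matrix.diagonal (fun j => (s j : ℂ)) * (Dmat K M)ᵀ))⁻¹
          = Matrix.diagonal (fun i : Fin K =>
              (((Rtil K M s (fun j => s j / (v j) ^ 2) i : ℝ) : ℂ))⁻¹)) := by
  simpa only [Dmat_eq_fiberSumMatrix, sum_modNat_fiber_eq_ofReal_Rtil, ne_eq,
    Complex.ofReal_eq_zero] using smoothness_correction_spectral_form_general Fin.modNat hU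
      (fun j => (s j : ℂ)) fun j => Complex.ofReal_ne_zero.mpr (hv j)
end
end
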